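/- arXiv:1406.1026 — 4 statements merged into one kernel-verified Lean document; each statement's English description precedes it below -/
import Mathlib

section
/- Let X be a reflexive real Banach space and let I : X → ℝ be a sequentially weakly lower semicontinuous, non-convex functional such that I + φ is coercive for every φ ∈ X*. Then, for every convex set Y ⊆ X* that is dense in X*, there exists φ̃ ∈ Y such that the functional I + φ̃ has at least two global minima. -/
open Filter Topology Set NormedSpace

/-! Suppose that `I + φ` has at most one global minimum for every `φ ∈ Y`. In a reflexive space
coercivity bounds the sublevel sets of `I + φ`, and by the Eberlein–Šmulian theorem sequential weak
lower semicontinuity makes them weakly compact. Ricceri's minimax theorem trades the usual convexity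
in `x` for uniqueness of the minima: applied to `(x, φ) ↦ I x + φ (x - x₀)` it gives
`sup_φ min_x = min_x sup_φ`. Since `Y` is dense, the inner supremum on the right is infinite unless
`x = x₀`, so `I x₀ = sup_φ min_x (I x + φ x - φ x₀)` is a supremum of affine functions of `x₀`,
and `I` is convex.

The Eberlein–Šmulian theorem comes from two facts: a point of a weak closure lies in the weak
closure of a countable subset, because finite powers of the weak-* dual are Lindelöf, and a
norm-separable weakly compact set is metrizable, because countably many functionals separate it. -/

section CountableTightness

lemma mem_closure_pi_iff_forall_fin {K M : Type*} [PseudoMetricSpace M] {A : Set (K → M)}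
    {f : K → M} :
    f ∈ closure A ↔
      ∀ (n m : ℕ) (s : Fin n → K), ∃ g ∈ A, ∀ i, dist (g (s i)) (f (s i)) < 1 / (m + 1) := by
  have hbasis := hasBasis_pi fun k => Metric.nhds_basis_ball_inv_nat_succ (x := f k)
  rw [← nhds_pi] at hbasis
  rw [mem_closure_iff_nhds_basis hbasis]
  constructor
  · intro h n m s
    obtain ⟨g, hgA, hg⟩ := h (range s, fun _ => m) ⟨finite_range s, fun _ _ => trivial⟩
    exact ⟨g, hgA, fun i => hg (s i) (mem_range_self i)⟩
  · rintro h ⟨F, r⟩ ⟨hF, -⟩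
    obtain ⟨n, s, -, rfl⟩ := hF.fin_param
    obtain ⟨m, hm⟩ := (finite_range (r ∘ s)).bddAbove
    obtain ⟨g, hgA, hg⟩ := h n m s
    refine ⟨g, hgA, ?_⟩
    rintro _ ⟨i, rfl⟩
    exact (hg i).trans_le (Nat.one_div_le_one_div (hm (mem_range_self i)))

lemma exists_countable_subset_mem_closure_of_continuous {K M : Type*} [TopologicalSpace K]
    [∀ n : ℕ, LindelofSpace (Fin n → K)] [PseudoMetricSpace M] {A : Set (K → M)} {f : K → M}
    (hA : ∀ g ∈ A, Continuous g) (hf : Continuous f) (hfA : f ∈ closure A) :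
    ∃ B ⊆ A, B.Countable ∧ f ∈ closure B := by
  rw [mem_closure_pi_iff_forall_fin] at hfA
  have hcover (n m : ℕ) : ∃ B ⊆ A, B.Countable ∧
      ∀ s : Fin n → K, ∃ g ∈ B, ∀ i, dist (g (s i)) (f (s i)) < 1 / (m + 1) := by
    let U (g : K → M) : Set (Fin n → K) := {s | ∀ i, dist (g (s i)) (f (s i)) < 1 / (m + 1)}
    have hU : ∀ g ∈ A, IsOpen (U g) := fun g hg => by
      simp only [U, ofPred_forall]
      exact isOpen_iInter_of_finite fun i => isOpen_lt
        (((hA g hg).comp (continuous_apply i)).dist (hf.comp (continuous_apply i)))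
        continuous_const
    obtain ⟨B, hBA, hB, hcov⟩ := isLindelof_univ.elim_countable_subcover_image hU
      fun s _ => by simpa [U] using hfA n m s
    exact ⟨B, hBA, hB, fun s => by simpa [U] using hcov (mem_univ s)⟩
  choose B hBA hB hBf using hcover
  refine ⟨⋃ n, ⋃ m, B n m, iUnion₂_subset hBA, countable_iUnion fun n => countable_iUnion (hB n),
    mem_closure_pi_iff_forall_fin.2 fun n m s => ?_⟩
  obtain ⟨g, hg, hgs⟩ := hBf n m s
  exact ⟨g, mem_iUnion₂.2 ⟨n, m, hg⟩, hgs⟩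

variable {𝕜 E : Type*} [NontriviallyNormedField 𝕜] [SeminormedAddCommGroup E] [NormedSpace 𝕜 E]

instance sigmaCompactSpace_weakDual [ProperSpace 𝕜] : SigmaCompactSpace (WeakDual 𝕜 E) := by
  refine ⟨fun n => WeakDual.toStrongDual ⁻¹' Metric.closedBall 0 n,
    fun n => WeakDual.isCompact_closedBall 0 n, ?_⟩
  rw [← preimage_iUnion, Metric.iUnion_closedBall_nat, preimage_univ]

lemma exists_countable_subset_mem_closure_weakSpace [ProperSpace 𝕜] {A : Set (WeakSpace 𝕜 E)}
    {x : WeakSpace 𝕜 E} (hx : x ∈ closure A) : ∃ B ⊆ A, B.Countable ∧ x ∈ closure B := by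
  let eval (y : WeakSpace 𝕜 E) (ψ : WeakDual 𝕜 E) : 𝕜 := ψ ((toWeakSpace 𝕜 E).symm y)
  have heval : IsInducing eval := ⟨rfl⟩
  have heval_cont (y : WeakSpace 𝕜 E) : Continuous (eval y) := WeakDual.eval_continuous _
  rw [heval.closure_eq_preimage_closure_image] at hx
  obtain ⟨B', hB'A, hB', hxB'⟩ := exists_countable_subset_mem_closure_of_continuous
    (forall_mem_image.2 fun y _ => heval_cont y) (heval_cont x) hx
  obtain ⟨B, hBA, hBij⟩ := SurjOn.exists_bijOn_subset hB'A
  rw [← hBij.image_eq] at hB' hxB'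
  exact ⟨B, hBA, countable_of_injective_of_countable_image hBij.injOn hB',
    heval.closure_eq_preimage_closure_image B ▸ hxB'⟩

lemma continuous_strongDual_weakSpace (ψ : StrongDual 𝕜 E) :
    Continuous fun x : WeakSpace 𝕜 E => ψ ((toWeakSpace 𝕜 E).symm x) :=
  WeakBilin.eval_continuous _ ψ

end CountableTightness

section EberleinSmulian

open TopologicalSpace

lemma exists_countable_separating_strongDual {𝕜 E : Type*} [Ring 𝕜] [TopologicalSpace 𝕜]
    [T2Space 𝕜] [AddCommGroup E] [Module 𝕜 E] [TopologicalSpace E] [PseudoMetrizableSpace E]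
    [SeparatingDual 𝕜 E] {S : Set E} (hS : IsSeparable S) :
    ∃ F : Set (StrongDual 𝕜 E), F.Countable ∧
      ∀ x ∈ S, ∀ y ∈ S, x ≠ y → ∃ ψ ∈ F, ψ x ≠ ψ y := by
  have := hS.secondCountableTopology
  let U (ψ : StrongDual 𝕜 E) : Set (S × S) := {p | ψ p.1 ≠ ψ p.2}
  have hU (ψ : StrongDual 𝕜 E) : IsOpen (U ψ) := isOpen_ne_fun (by fun_prop) (by fun_prop)
  have hcover : {p : S × S | p.1 ≠ p.2} ⊆ ⋃ ψ, U ψ := fun p hp =>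
    mem_iUnion.2 (SeparatingDual.exists_separating_of_ne (Subtype.coe_injective.ne hp))
  obtain ⟨F, hF, hFcover⟩ :=
    (HereditarilyLindelofSpace.isLindelof _).elim_countable_subcover U hU hcover
  refine ⟨F, hF, fun x hx y hy hxy => ?_⟩
  have hmem : ((⟨x, hx⟩, ⟨y, hy⟩) : S × S) ∈ {p : S × S | p.1 ≠ p.2} := by simpa using hxy
  simpa [U] using hFcover hmem

section RCLike

variable {𝕜 E : Type*} [RCLike 𝕜] [NormedAddCommGroup E] [NormedSpace 𝕜 E]

lemma metrizableSpace_of_isCompact_weakSpace_of_isSeparable {K : Set (WeakSpace 𝕜 E)}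
    (hK : IsCompact K) (hsep : IsSeparable (toWeakSpace 𝕜 E ⁻¹' K)) : MetrizableSpace K := by
  have := isCompact_iff_compactSpace.1 hK
  obtain ⟨F, hF, hFsep⟩ := exists_countable_separating_strongDual (𝕜 := 𝕜) hsep
  obtain ⟨ψ, hψ⟩ := countable_iff_exists_subset_range.1 hF
  refine Metric.PiNatEmbed.TopologicalSpace.MetrizableSpace.of_countable_separating
    (fun n (x : K) => ψ n ((toWeakSpace 𝕜 E).symm x))
    (fun n => (continuous_strongDual_weakSpace (ψ n)).comp continuous_subtype_val) fun x y hxy => ?_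
  obtain ⟨_, hmem, hne⟩ := hFsep _ x.2 _ y.2 (Subtype.coe_injective.ne hxy)
  obtain ⟨n, rfl⟩ := hψ hmem
  exact ⟨n, hne⟩

lemma isCompact_closure_weakSpace_of_surjective
    (hrefl : Function.Surjective (inclusionInDoubleDual 𝕜 E)) {S : Set (WeakSpace 𝕜 E)}
    (hS : Bornology.IsBounded (toWeakSpace 𝕜 E ⁻¹' S)) : IsCompact (closure S) := by
  have hrange : Function.Surjective (inclusionInDoubleDualWeak 𝕜 E) := hrefl
  exact isCompact_closure_of_isBounded 𝕜 E S hS (by simp [hrange.range_eq])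

end RCLike

variable {E : Type*} [NormedAddCommGroup E] [NormedSpace ℝ E]

lemma isSeparable_preimage_closure_weakSpace_of_countable {B : Set (WeakSpace ℝ E)}
    (hB : B.Countable) : IsSeparable (toWeakSpace ℝ E ⁻¹' closure B) := by
  let V := Submodule.span ℝ (toWeakSpace ℝ E ⁻¹' B)
  have hV : IsSeparable (V : Set E) :=
    (hB.preimage (toWeakSpace ℝ E).injective).isSeparable.span
  have hBV : B ⊆ toWeakSpace ℝ E '' V := by
    rw [← image_preimage_eq B (toWeakSpace ℝ E).surjective]
    exact image_mono Submodule.subset_span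
  refine hV.closure.mono ?_
  rw [← (toWeakSpace ℝ E).injective.preimage_image (s := closure (V : Set E)),
    V.convex.toWeakSpace_closure ℝ]
  exact preimage_mono (closure_mono hBV)

theorem isClosed_weakSpace_of_isSeqClosed_of_isCompact_closure {A : Set (WeakSpace ℝ E)}
    (hA : IsSeqClosed A) (hcompact : IsCompact (closure A)) : IsClosed A := by
  refine isClosed_of_closure_subset fun x hx => ?_
  obtain ⟨B, hBA, hB, hxB⟩ := exists_countable_subset_mem_closure_weakSpace hx
  have := metrizableSpace_of_isCompact_weakSpace_of_isSeparable
    (hcompact.of_isClosed_subset isClosed_closure (closure_mono hBA))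
    (isSeparable_preimage_closure_weakSpace_of_countable hB)
  have hclosed : IsClosed ((↑) ⁻¹' A : Set (closure B)) :=
    (hA.preimage continuous_subtype_val.seqContinuous).isClosed
  have hdense : Dense ((↑) ⁻¹' B : Set (closure B)) := Subtype.dense_iff.2 <| by
    rw [Subtype.image_preimage_coe, inter_eq_right.2 subset_closure]
  exact hclosed.closure_subset_iff.2 (preimage_mono hBA) (hdense ⟨x, hxB⟩)

end EberleinSmulian

section WeakLowerSemicontinuity

variable {X : Type*} [NormedAddCommGroup X] [NormedSpace ℝ X]

/-- Sequential lower semicontinuity for the weak topology. A sequence `u` converges weakly to `x`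
when `ψ (u n)` tends to `ψ x` for every `ψ` in the dual. -/
def SeqWeaklyLowerSemicontinuous (I : X → ℝ) : Prop :=
  ∀ (u : ℕ → X) (x : X),
    (∀ ψ : StrongDual ℝ X, Tendsto (fun n => ψ (u n)) atTop (𝓝 (ψ x))) →
    ∀ b < I x, ∀ᶠ n in atTop, b < I (u n)

namespace SeqWeaklyLowerSemicontinuous

variable {I : X → ℝ}

lemma add_strongDual (hI : SeqWeaklyLowerSemicontinuous I) (φ : StrongDual ℝ X) :
    SeqWeaklyLowerSemicontinuous fun x => I x + φ x := by
  intro u x hu b hb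
  obtain ⟨ε, hε, hbε⟩ : ∃ ε > 0, b + ε + ε = I x + φ x :=
    ⟨(I x + φ x - b) / 2, by linarith, by ring⟩
  filter_upwards [hI u x hu (I x - ε) (by linarith),
    (hu φ).eventually_const_lt (sub_lt_self (φ x) hε)] with n hIn hφn
  linarith

lemma isSeqClosed_sublevel (hI : SeqWeaklyLowerSemicontinuous I) (c : ℝ) :
    IsSeqClosed {x : WeakSpace ℝ X | I ((toWeakSpace ℝ X).symm x) ≤ c} := by
  intro u x hu hux
  by_contra hx
  have hweak (ψ : StrongDual ℝ X) := ((continuous_strongDual_weakSpace ψ).tendsto x).comp hux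
  obtain ⟨n, hn⟩ := (hI _ _ hweak c (not_le.1 hx)).exists
  exact hn.not_ge (hu n)

lemma isCompact_sublevel (hI : SeqWeaklyLowerSemicontinuous I)
    (hcoercive : Tendsto I (Bornology.cobounded X) atTop)
    (hrefl : Function.Surjective (inclusionInDoubleDual ℝ X)) (c : ℝ) :
    IsCompact {x : WeakSpace ℝ X | I ((toWeakSpace ℝ X).symm x) ≤ c} := by
  have hbounded : Bornology.IsBounded {x | I x ≤ c} := by
    rw [Bornology.isBounded_def]
    filter_upwards [hcoercive.eventually_gt_atTop c] with x hx using not_le.2 hx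
  have hcompact := isCompact_closure_weakSpace_of_surjective hrefl
    (S := {x | I ((toWeakSpace ℝ X).symm x) ≤ c}) hbounded
  have hclosed := isClosed_weakSpace_of_isSeqClosed_of_isCompact_closure
    (hI.isSeqClosed_sublevel c) hcompact
  rwa [hclosed.closure_eq] at hcompact

end SeqWeaklyLowerSemicontinuous

end WeakLowerSemicontinuity

section Minimax

lemma le_of_forall_mem_Ioo_convexCombination_le {a b c : ℝ}
    (h : ∀ t ∈ Ioo (0 : ℝ) 1, (1 - t) * a + t * b ≤ c) : a ≤ c := by
  have hcont : Continuous fun t : ℝ => (1 - t) * a + t * b := by fun_prop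
  have hlim : Tendsto (fun t : ℝ => (1 - t) * a + t * b) (𝓝[>] 0) (𝓝 a) :=
    (hcont.tendsto' 0 a (by simp)).mono_left nhdsWithin_le_nhds
  exact le_of_tendsto hlim (eventually_of_mem (Ioo_mem_nhdsGT one_pos) h)

variable {X : Type*} [TopologicalSpace X] [T2Space X]

lemma lowerSemicontinuous_of_isCompact_sublevel {g : X → ℝ} (hg : ∀ c, IsCompact {x | g x ≤ c}) :
    LowerSemicontinuous g :=
  lowerSemicontinuous_iff_isClosed_preimage.2 fun c => (hg c).isClosed

lemma exists_isMinOn_univ_of_isCompact_sublevel [Nonempty X] {g : X → ℝ}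
    (hg : ∀ c, IsCompact {x | g x ≤ c}) : ∃ x, IsMinOn g univ x := by
  obtain ⟨x₀⟩ := ‹Nonempty X›
  obtain ⟨x, -, hx⟩ := ((lowerSemicontinuous_of_isCompact_sublevel hg).lowerSemicontinuousOn
    _).exists_isMinOn ⟨x₀, le_refl (g x₀)⟩ (hg (g x₀))
  refine ⟨x, fun y _ => ?_⟩
  rcases le_total (g y) (g x₀) with hy | hy
  · exact hx hy
  · exact (hx (le_refl (g x₀))).trans hy

lemma le_of_forall_exists_convexCombination_le {g h : X → ℝ} (hg : LowerSemicontinuous g)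
    (hh : ∀ c, IsCompact {x | h x ≤ c}) {x₀ : X} (hmin : IsMinOn g univ x₀)
    (hunique : {x | IsMinOn g univ x}.Subsingleton)
    (hle : ∀ t ∈ Ioo (0 : ℝ) 1, ∃ x, (1 - t) * g x + t * h x ≤ g x₀) : h x₀ ≤ g x₀ := by
  have hmem_sublevel : ∀ t ∈ Ioo (0 : ℝ) 1, ∀ x, (1 - t) * g x + t * h x ≤ g x₀ →
      h x ≤ g x₀ := by
    rintro t ⟨ht₀, ht₁⟩ x hx
    refine le_of_mul_le_mul_left ?_ ht₀
    linarith [mul_le_mul_of_nonneg_left (hmin (mem_univ x)) (sub_nonneg.2 ht₁.le)]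
  have hne : {x | h x ≤ g x₀}.Nonempty :=
    (hle (1 / 2) (by norm_num)).imp (hmem_sublevel _ (by norm_num))
  have : Nonempty X := ⟨x₀⟩
  obtain ⟨z, hz⟩ := exists_isMinOn_univ_of_isCompact_sublevel hh
  obtain ⟨x₁, hx₁, hx₁min⟩ := (hg.lowerSemicontinuousOn _).exists_isMinOn hne (hh (g x₀))
  -- Letting `t → 0` shows that `x₁`, which minimises `g` on `{h ≤ g x₀}`, minimises `g` globally.
  have hbound : ∀ t ∈ Ioo (0 : ℝ) 1, (1 - t) * g x₁ + t * h z ≤ g x₀ := by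
    intro t ht
    obtain ⟨x, hx⟩ := hle t ht
    have hgx : g x₁ ≤ g x := hx₁min (hmem_sublevel t ht x hx)
    have hhx : h z ≤ h x := hz (mem_univ x)
    have ht₀ : 0 ≤ t := ht.1.le
    have ht₁ : 0 ≤ 1 - t := sub_nonneg.2 ht.2.le
    calc (1 - t) * g x₁ + t * h z ≤ (1 - t) * g x + t * h x := by gcongr
      _ ≤ g x₀ := hx
  have hx₁x₀ : g x₁ ≤ g x₀ := le_of_forall_mem_Ioo_convexCombination_le hbound
  have hx₁eq : x₁ = x₀ := hunique (fun _ hx => hx₁x₀.trans (hmin hx)) hmin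
  exact hx₁eq ▸ hx₁

variable {E : Type*} [TopologicalSpace E] [AddCommGroup E] [Module ℝ E] {f : X → E → ℝ} {c : ℝ}

lemma exists_forall_mem_le_of_isCompact {K : Set E} (hK : IsCompact K) (hne : K.Nonempty)
    (hconcave : ∀ x, ConcaveOn ℝ K (f x)) (husc : ∀ x, UpperSemicontinuousOn (f x) K)
    (hcompact : ∀ y ∈ K, ∀ c, IsCompact {x | f x y ≤ c})
    (hunique : ∀ y ∈ K, {x | IsMinOn (f · y) univ x}.Subsingleton)
    (hle : ∀ y ∈ K, ∃ x, f x y ≤ c) : ∃ x, ∀ y ∈ K, f x y ≤ c := by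
  have : Nonempty X := hne.elim fun y hy => (hle y hy).nonempty
  have hmin : ∀ y ∈ K, ∃ x, IsMinOn (f · y) univ x := fun y hy =>
    exists_isMinOn_univ_of_isCompact_sublevel (hcompact y hy)
  choose! m hm using hmin
  have hvalue : UpperSemicontinuousOn (fun y => f (m y) y) K :=
    upperSemicontinuousOn_of_forall_isMinOn_and_mem (fun x _ => husc x) (fun _ _ => mem_univ _) hm
  obtain ⟨y₀, hy₀, hy₀max⟩ := hvalue.exists_isMaxOn hne hK
  have hvalue_le : f (m y₀) y₀ ≤ c := by
    obtain ⟨x, hx⟩ := hle y₀ hy₀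
    exact (hm y₀ hy₀ (mem_univ x)).trans hx
  refine ⟨m y₀, fun y hy => le_trans ?_ hvalue_le⟩
  refine le_of_forall_exists_convexCombination_le
    (lowerSemicontinuous_of_isCompact_sublevel (hcompact y₀ hy₀)) (hcompact y hy) (hm y₀ hy₀)
    (hunique y₀ hy₀) ?_
  rintro t ⟨ht₀, ht₁⟩
  let yt := (1 - t) • y₀ + t • y
  have hyt : yt ∈ K :=
    (hconcave (m y₀)).1 hy₀ hy (sub_nonneg.2 ht₁.le) ht₀.le (sub_add_cancel 1 t)
  refine ⟨m yt, ?_⟩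
  calc (1 - t) * f (m yt) y₀ + t * f (m yt) y
      ≤ f (m yt) yt :=
        (hconcave (m yt)).2 hy₀ hy (sub_nonneg.2 ht₁.le) ht₀.le (sub_add_cancel 1 t)
    _ ≤ f (m y₀) y₀ := hy₀max hyt

theorem exists_forall_mem_le_of_subsingleton_isMinOn [IsTopologicalAddGroup E]
    [ContinuousSMul ℝ E] {Y : Set E} (hne : Y.Nonempty)
    (hconcave : ∀ x, ConcaveOn ℝ Y (f x)) (husc : ∀ x, UpperSemicontinuousOn (f x) Y)
    (hcompact : ∀ y ∈ Y, ∀ c, IsCompact {x | f x y ≤ c})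
    (hunique : ∀ y ∈ Y, {x | IsMinOn (f · y) univ x}.Subsingleton)
    (hle : ∀ y ∈ Y, ∃ x, f x y ≤ c) : ∃ x, ∀ y ∈ Y, f x y ≤ c := by
  obtain ⟨y₀, hy₀⟩ := hne
  obtain ⟨x₀, -⟩ := hle y₀ hy₀
  have hY := (hconcave x₀).1
  have hfip (u : Finset Y) : ({x | f x y₀ ≤ c} ∩ ⋂ y ∈ u, {x | f x y ≤ c}).Nonempty := by
    let K := convexHull ℝ (insert y₀ ((↑) '' (u : Set Y)))
    have hKY : K ⊆ Y :=
      convexHull_min (insert_subset hy₀ (Subtype.coe_image_subset Y u)) hY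
    have hmemK : insert y₀ ((↑) '' (u : Set Y)) ⊆ K := subset_convexHull ℝ _
    obtain ⟨x, hx⟩ := exists_forall_mem_le_of_isCompact
      (((u.finite_toSet.image _).insert y₀).isCompact_convexHull ℝ) ⟨y₀, hmemK (mem_insert _ _)⟩
      (fun x => (hconcave x).subset hKY (convex_convexHull ℝ _)) (fun x => (husc x).mono hKY)
      (fun y hy => hcompact y (hKY hy)) (fun y hy => hunique y (hKY hy))
      (fun y hy => hle y (hKY hy))
    exact ⟨x, hx y₀ (hmemK (mem_insert _ _)), mem_iInter₂.2 fun y hy =>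
      hx y (hmemK (mem_insert_of_mem _ (mem_image_of_mem _ hy)))⟩
  obtain ⟨x, -, hx⟩ := (hcompact y₀ hy₀ c).inter_iInter_nonempty (fun y : Y => {x | f x y ≤ c})
    (fun y => (hcompact y y.2 c).isClosed) hfip
  exact ⟨x, fun y hy => mem_iInter.1 hx ⟨y, hy⟩⟩

end Minimax

section DualPerturbation

lemma eq_zero_of_forall_mem_dense_apply_le {X : Type*} [NormedAddCommGroup X] [NormedSpace ℝ X]
    {Y : Set (StrongDual ℝ X)} (hY : Dense Y) {x : X} {C : ℝ} (hC : ∀ φ ∈ Y, φ x ≤ C) :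
    x = 0 := by
  have hclosed : IsClosed {φ : StrongDual ℝ X | φ x ≤ C} :=
    isClosed_le (ContinuousEvalConst.continuous_eval_const x) continuous_const
  have hbound (φ : StrongDual ℝ X) : φ x ≤ C := closure_minimal hC hclosed (hY φ)
  by_contra hx
  obtain ⟨φ, hφ⟩ := SeparatingDual.exists_eq_one (R := ℝ) hx
  have hscaled := hbound ((C + 1) • φ)
  norm_num [hφ] at hscaled

variable {X : Type*} [NormedAddCommGroup X] [NormedSpace ℝ X] {I : X → ℝ}
  {Y : Set (StrongDual ℝ X)}

lemma le_of_forall_mem_exists_add_le (hrefl : Function.Surjective (inclusionInDoubleDual ℝ X))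
    (hI : SeqWeaklyLowerSemicontinuous I) (hconv : Convex ℝ Y) (hdense : Dense Y)
    (hcoercive : ∀ φ ∈ Y, Tendsto (fun x => I x + φ x) (Bornology.cobounded X) atTop)
    (hunique : ∀ φ ∈ Y, {x | IsMinOn (fun x => I x + φ x) univ x}.Subsingleton)
    {x₀ : X} {c : ℝ} (hle : ∀ φ ∈ Y, ∃ x, I x + φ x ≤ c + φ x₀) : I x₀ ≤ c := by
  let f (x : WeakSpace ℝ X) (φ : StrongDual ℝ X) : ℝ :=
    I ((toWeakSpace ℝ X).symm x) + φ ((toWeakSpace ℝ X).symm x - x₀)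
  have hcompact : ∀ φ ∈ Y, ∀ b, IsCompact {x | f x φ ≤ b} := fun φ hφ b => by
    simpa [f, ← add_sub_assoc] using
      (hI.add_strongDual φ).isCompact_sublevel (hcoercive φ hφ) hrefl (b + φ x₀)
  have hminf : ∀ φ ∈ Y, {x | IsMinOn (f · φ) univ x}.Subsingleton := fun φ hφ =>
    ((hunique φ hφ).preimage (toWeakSpace ℝ X).symm.injective).anti fun x hx z _ => by
      simpa [f, ← add_sub_assoc] using hx (mem_univ (toWeakSpace ℝ X z))
  obtain ⟨x₁, hx₁⟩ : ∃ x, ∀ φ ∈ Y, f x φ ≤ c := by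
    refine exists_forall_mem_le_of_subsingleton_isMinOn hdense.nonempty (fun x => ?_)
      (fun x => ?_) hcompact hminf fun φ hφ => ?_
    · refine ⟨hconv, fun φ _ χ _ a b _ _ hab => le_of_eq ?_⟩
      simp only [f, map_sub, smul_eq_mul, add_apply, smul_apply]
      linear_combination I ((toWeakSpace ℝ X).symm x) * hab
    · exact (continuous_const.add
        (ContinuousEvalConst.continuous_eval_const _)).upperSemicontinuous.upperSemicontinuousOn Y
    · obtain ⟨x, hx⟩ := hle φ hφ
      exact ⟨toWeakSpace ℝ X x, by simpa [f, ← add_sub_assoc] using hx⟩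
  have hx₁x₀ : (toWeakSpace ℝ X).symm x₁ = x₀ := sub_eq_zero.1 <|
    eq_zero_of_forall_mem_dense_apply_le hdense fun φ hφ => le_sub_iff_add_le'.2 (hx₁ φ hφ)
  obtain ⟨φ, hφ⟩ := hdense.nonempty
  simpa [f, hx₁x₀] using hx₁ φ hφ

theorem convexOn_univ_of_subsingleton_isMinOn_add
    (hrefl : Function.Surjective (inclusionInDoubleDual ℝ X))
    (hI : SeqWeaklyLowerSemicontinuous I) (hconv : Convex ℝ Y) (hdense : Dense Y)
    (hcoercive : ∀ φ ∈ Y, Tendsto (fun x => I x + φ x) (Bornology.cobounded X) atTop)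
    (hunique : ∀ φ ∈ Y, {x | IsMinOn (fun x => I x + φ x) univ x}.Subsingleton) :
    ConvexOn ℝ univ I := by
  refine ⟨convex_univ, fun x _ y _ a b ha hb hab => ?_⟩
  refine le_of_forall_mem_exists_add_le hrefl hI hconv hdense hcoercive hunique fun φ _ => ?_
  have hcombo : a • I x + b • I y + φ (a • x + b • y) = a • (I x + φ x) + b • (I y + φ y) := by
    simp only [map_add, map_smul, smul_add]
    abel
  rw [hcombo]
  rcases min_le_iff.1 (Convex.min_le_combo (I x + φ x) (I y + φ y) ha hb hab) with hx | hy
  · exact ⟨x, hx⟩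
  · exact ⟨y, hy⟩

end DualPerturbation

theorem dense_convex_set_contains_functional_with_two_global_minima_general
    {X : Type*} [NormedAddCommGroup X] [NormedSpace ℝ X]
    (hrefl : Function.Surjective (inclusionInDoubleDual ℝ X)) {I : X → ℝ}
    (hI : SeqWeaklyLowerSemicontinuous I) (hnconv : ¬ ConvexOn ℝ univ I)
    {Y : Set (StrongDual ℝ X)} (hconv : Convex ℝ Y) (hdense : Dense Y)
    (hcoercive : ∀ φ ∈ Y, Tendsto (fun x => I x + φ x) (Bornology.cobounded X) atTop) :
    ∃ φ ∈ Y, ∃ u v : X, u ≠ v ∧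
      (∀ w : X, I u + φ u ≤ I w + φ w) ∧ (∀ w : X, I v + φ v ≤ I w + φ w) := by
  by_contra! hsingle
  refine hnconv (convexOn_univ_of_subsingleton_isMinOn_add hrefl hI hconv hdense hcoercive ?_)
  intro φ hφ u hu v hv
  by_contra huv
  obtain ⟨w, hw⟩ := hsingle φ hφ u v huv fun w => hu (mem_univ w)
  exact hw.not_ge (hv (mem_univ w))

/-- Corollary 1: let `X` be a reflexive real Banach space and `I : X → ℝ` a sequentially
weakly lower semicontinuous, non-convex functional such that `I + φ` is coercive for every
`φ ∈ X*`. Then for every convex set `Y ⊆ X*` dense in `X*` there exists `φ̃ ∈ Y` such that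
`I + φ̃` has at least two global minima. -/
theorem dense_convex_set_contains_functional_with_two_global_minima
    {X : Type*} [NormedAddCommGroup X] [NormedSpace ℝ X] [CompleteSpace X]
    (hrefl : Function.Surjective (inclusionInDoubleDual ℝ X))
    (I : X → ℝ)
    -- `I` is sequentially weakly lower semicontinuous
    (hswlsc : ∀ (u : ℕ → X) (x : X),
      (∀ ψ : StrongDual ℝ X, Tendsto (fun n => ψ (u n)) atTop (𝓝 (ψ x))) →
      ∀ b < I x, ∀ᶠ n in atTop, b < I (u n))
    -- `I` is not convex
    (hnconv : ¬ ConvexOn ℝ Set.univ I)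
    -- `I + φ` is coercive for every `φ ∈ X*`
    (hcoer : ∀ φ : StrongDual ℝ X,
      Tendsto (fun x => I x + φ x) (comap (fun x : X => ‖x‖) atTop) atTop) :
    ∀ Y : Set (StrongDual ℝ X), Convex ℝ Y → Dense Y →
      ∃ φ ∈ Y, ∃ u v : X, u ≠ v ∧
        (∀ w : X, I u + φ u ≤ I w + φ w) ∧ (∀ w : X, I v + φ v ≤ I w + φ w) := by
  intro Y hconv hdense
  exact dense_convex_set_contains_functional_with_two_global_minima_general hrefl hswlsc hnconv
    hconv hdense fun φ _ => comap_norm_atTop (E := X) ▸ hcoer φ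
end

section
/- If V is an infinite-dimensional real Banach space and U ⊂ V is a σ-compact set, then there exists a convex cone C ⊂ V, dense in V, such that U ∩ C = ∅. -/
open Filter Topology Set

/-!
A Hausdorff Baire vector space that is σ-compact has a compact set with nonempty interior, hence is
finite-dimensional. So if `V` is infinite-dimensional and `U` is σ-compact, then `span U` has
infinite codimension: otherwise adding finitely many vectors to `U` would make `V` itself σ-compact.

Infinitely many coordinate functionals of a basis of `V ⧸ span U` lift to nonzero functionals
`φ₀, φ₁, …` on `V` that vanish on `U`, and each vector is annihilated by all but finitely many of
them. If every `φₙ` were continuous, the closed subspaces `⋂ m ≥ n, ker φₘ` would cover `V`, and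
Baire's theorem would force one of them to be all of `V`. So some `φₙ` is discontinuous; its fibres
are dense, and the cone is the half-space `{x | 0 < φₙ x}`.
-/

theorem isSigmaCompact_span (R : Type*) {M : Type*} [Semiring R] [TopologicalSpace R]
    [SigmaCompactSpace R] [AddCommMonoid M] [Module R M] [TopologicalSpace M] [ContinuousAdd M]
    [ContinuousSMul R M] {s : Set M} (hs : IsSigmaCompact s) :
    IsSigmaCompact (Submodule.span R s : Set M) := by
  have : SigmaCompactSpace s := isSigmaCompact_iff_sigmaCompactSpace.mp hs
  have span_eq_iUnion_range : (Submodule.span R s : Set M) =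
      ⋃ n : ℕ, range fun p : (Fin n → R) × (Fin n → s) ↦ ∑ i, p.1 i • (p.2 i : M) := by
    ext x
    simp only [SetLike.mem_coe, Submodule.mem_span_set', mem_iUnion, mem_range, Prod.exists]
  rw [span_eq_iUnion_range]
  exact isSigmaCompact_iUnion _ fun n ↦ isSigmaCompact_range (by fun_prop)

theorem locallyCompactSpace_of_sigmaCompactSpace_of_baireSpace (G : Type*) [AddGroup G]
    [TopologicalSpace G] [IsTopologicalAddGroup G] [SigmaCompactSpace G] [BaireSpace G] :
    LocallyCompactSpace G := by
  have closures_cover : ⋃ n, closure (compactCovering G n) = univ :=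
    eq_univ_of_subset (iUnion_mono fun _ ↦ subset_closure) (iUnion_compactCovering G)
  obtain ⟨n, x, hx⟩ := nonempty_interior_of_iUnion_of_closed (fun _ ↦ isClosed_closure)
    closures_cover
  exact (isCompact_compactCovering G n).closure.locallyCompactSpace_of_mem_nhds_of_addGroup
    (mem_interior_iff_mem_nhds.mp hx)

theorem exists_seq_ne_zero_forall_eventually_apply_eq_zero {K M : Type*} [DivisionRing K]
    [AddCommGroup M] [Module K M] (hM : ¬ FiniteDimensional K M) :
    ∃ φ : ℕ → M →ₗ[K] K, (∀ n, φ n ≠ 0) ∧ ∀ x, ∀ᶠ n in atTop, φ n x = 0 := by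
  let b := Module.Basis.ofVectorSpace K M
  have : Infinite (Module.Basis.ofVectorSpaceIndex K M) :=
    not_finite_iff_infinite.mp fun _ ↦ hM (Module.Finite.of_basis b)
  let e := Infinite.natEmbedding (Module.Basis.ofVectorSpaceIndex K M)
  have coord_ne_zero (n : ℕ) : b.coord (e n) ≠ 0 := fun h ↦ by
    simpa using LinearMap.congr_fun h (b (e n))
  refine ⟨fun n ↦ b.coord (e n), coord_ne_zero, fun x ↦ ?_⟩
  have finite_support : {n | b.repr x (e n) ≠ 0}.Finite :=
    (b.repr x).hasFiniteSupport.preimage e.injective.injOn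
  rw [← Nat.cofinite_eq_atTop]
  simpa [Filter.eventually_cofinite] using finite_support

theorem eventually_eq_zero_of_forall_eventually_apply_eq_zero {R M N : Type*} [Ring R]
    [TopologicalSpace R] [NeBot (𝓝[{r : R | IsUnit r}] 0)] [AddCommGroup M] [Module R M]
    [TopologicalSpace M] [ContinuousAdd M] [ContinuousSMul R M] [BaireSpace M] [AddCommGroup N]
    [Module R N] [TopologicalSpace N] [T1Space N] {φ : ℕ → M →L[R] N}
    (hφ : ∀ x, ∀ᶠ n in atTop, φ n x = 0) : ∀ᶠ n in atTop, φ n = 0 := by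
  let tailKer (n : ℕ) : Submodule R M := ⨅ m ≥ n, (φ m).ker
  have mem_tailKer {n : ℕ} {x : M} : x ∈ tailKer n ↔ ∀ m ≥ n, φ m x = 0 := by
    simp [tailKer]
  have isClosed_tailKer (n : ℕ) : IsClosed (tailKer n : Set M) := by
    simp only [tailKer, Submodule.coe_iInf]
    exact isClosed_biInter fun m _ ↦ (φ m).isClosed_ker
  have iUnion_tailKer : ⋃ n, (tailKer n : Set M) = univ :=
    eq_univ_of_forall fun x ↦ mem_iUnion.mpr <|
      (eventually_atTop.mp (hφ x)).imp fun _ ↦ mem_tailKer.mpr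
  obtain ⟨n, hn⟩ := nonempty_interior_of_iUnion_of_closed isClosed_tailKer iUnion_tailKer
  have tailKer_eq_top : tailKer n = ⊤ := (tailKer n).eq_top_of_nonempty_interior' hn
  filter_upwards [eventually_ge_atTop n] with m hm
  ext x
  exact mem_tailKer.mp (tailKer_eq_top ▸ Submodule.mem_top) m hm

section TopologicalVectorSpace

variable {𝕜 V : Type*} [NontriviallyNormedField 𝕜] [AddCommGroup V] [Module 𝕜 V]
  [TopologicalSpace V] [IsTopologicalAddGroup V] [ContinuousSMul 𝕜 V]

theorem dense_preimage_singleton_of_not_continuous {f : V →ₗ[𝕜] 𝕜} (hf : ¬ Continuous f) (c : 𝕜) :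
    Dense (f ⁻¹' {c}) := by
  have dense_ker : Dense (f.ker : Set V) :=
    f.isClosed_or_dense_ker.resolve_left fun h ↦ hf (f.continuous_iff_isClosed_ker.mpr h)
  have f_ne_zero : f ≠ 0 := by
    rintro rfl
    exact hf continuous_zero
  obtain ⟨v, rfl⟩ := LinearMap.surjective f_ne_zero c
  have dense_translate : Dense ((v + ·) '' (f.ker : Set V)) :=
    (Homeomorph.addLeft v).surjective.denseRange.dense_image (continuous_const_add v) dense_ker
  refine dense_translate.mono ?_
  rintro _ ⟨x, hx, rfl⟩
  simp [LinearMap.mem_ker.mp hx]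

theorem exists_not_continuous_le_ker_of_not_coFG [BaireSpace V] {W : Submodule 𝕜 V}
    (hW : ¬ W.CoFG) : ∃ f : V →ₗ[𝕜] 𝕜, W ≤ f.ker ∧ ¬ Continuous f := by
  obtain ⟨φ, φ_ne_zero, φ_eventually⟩ := exists_seq_ne_zero_forall_eventually_apply_eq_zero hW
  by_contra! continuous_of_le_ker
  have le_ker (n : ℕ) : W ≤ (φ n ∘ₗ W.mkQ).ker := by
    simpa only [Submodule.ker_mkQ] using LinearMap.ker_le_ker_comp W.mkQ (φ n)
  let ψ (n : ℕ) : V →L[𝕜] 𝕜 := ⟨φ n ∘ₗ W.mkQ, continuous_of_le_ker _ (le_ker n)⟩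
  obtain ⟨n, hn⟩ := (eventually_eq_zero_of_forall_eventually_apply_eq_zero (φ := ψ)
    fun x ↦ φ_eventually (W.mkQ x)).exists
  refine φ_ne_zero n (LinearMap.cancel_right W.mkQ_surjective |>.mp ?_)
  exact congrArg ContinuousLinearMap.toLinearMap hn

theorem finiteDimensional_of_coFG_span_of_isSigmaCompact [CompleteSpace 𝕜] [SigmaCompactSpace 𝕜]
    [T2Space V] [BaireSpace V] {U : Set V} (hU : IsSigmaCompact U)
    (hspan : (Submodule.span 𝕜 U).CoFG) : FiniteDimensional 𝕜 V := by
  obtain ⟨F, hF⟩ := (Submodule.span 𝕜 U).exists_isCompl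
  obtain ⟨t, rfl⟩ := hspan.fg_of_isCompl hF
  have span_union : Submodule.span 𝕜 (U ∪ t) = ⊤ := by
    rw [Submodule.span_union, hF.sup_eq_top]
  have isSigmaCompact_union : IsSigmaCompact (U ∪ t) := by
    rw [union_eq_iUnion]
    exact isSigmaCompact_iUnion _ <|
      Bool.forall_bool.mpr ⟨t.finite_toSet.isCompact.isSigmaCompact, hU⟩
  have : SigmaCompactSpace V := by
    rw [← isSigmaCompact_univ_iff, ← Submodule.top_coe (R := 𝕜), ← span_union]
    exact isSigmaCompact_span 𝕜 isSigmaCompact_union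
  have := locallyCompactSpace_of_sigmaCompactSpace_of_baireSpace V
  exact FiniteDimensional.of_locallyCompactSpace 𝕜

end TopologicalVectorSpace

theorem exists_dense_convex_cone_avoiding_sigmaCompact_general
    {V : Type*} [AddCommGroup V] [Module ℝ V] [TopologicalSpace V] [IsTopologicalAddGroup V]
    [ContinuousSMul ℝ V] [T2Space V] [BaireSpace V] (hdim : ¬ FiniteDimensional ℝ V)
    (U : Set V) (hU : IsSigmaCompact U) :
    ∃ C : Set V, Convex ℝ C ∧ (∀ x ∈ C, ∀ t : ℝ, 0 < t → t • x ∈ C) ∧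
      Dense C ∧ U ∩ C = ∅ := by
  have span_not_coFG : ¬ (Submodule.span ℝ U).CoFG :=
    fun h ↦ hdim (finiteDimensional_of_coFG_span_of_isSigmaCompact hU h)
  obtain ⟨f, span_le_ker, hf⟩ := exists_not_continuous_le_ker_of_not_coFG span_not_coFG
  refine ⟨{x | 0 < f x}, convex_halfSpace_gt f.isLinear 0, fun x hx t ht ↦ ?_, ?_, ?_⟩
  · simpa using mul_pos ht hx
  · refine (dense_preimage_singleton_of_not_continuous hf 1).mono fun x hx ↦ ?_
    exact zero_lt_one.trans_eq (mem_singleton_iff.mp hx).symm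
  · refine disjoint_iff_inter_eq_empty.mp (disjoint_left.mpr fun x hxU (hx : 0 < f x) ↦ ?_)
    exact hx.ne' <| span_le_ker (Submodule.subset_span hxU)

/-- Proposition 1: if `V` is an infinite-dimensional real Banach space and `U ⊂ V` is a
σ-compact set, then there exists a convex cone `C ⊂ V`, dense in `V`, with `U ∩ C = ∅`. -/
theorem exists_dense_convex_cone_avoiding_sigmaCompact
    {V : Type*} [NormedAddCommGroup V] [NormedSpace ℝ V] [CompleteSpace V]
    (hdim : ¬ FiniteDimensional ℝ V)
    (U : Set V) (hU : IsSigmaCompact U) :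
    ∃ C : Set V, Convex ℝ C ∧ (∀ x ∈ C, ∀ t : ℝ, 0 < t → t • x ∈ C) ∧
      Dense C ∧ U ∩ C = ∅ :=
  exists_dense_convex_cone_avoiding_sigmaCompact_general hdim U hU
end

section
/- Let V be a non-separable real Banach space and let W ⊆ V be a separable linear subspace. Then there exists a convex cone C ⊂ V, dense in V, such that every element of C lies outside W; in particular, for any set U ⊆ V with span(U) separable, the set C' = C + span(U) is a dense convex cone in V with U ∩ C' = ∅ whenever U ⊆ span(U). -/
open Filter Topology Set Pointwise

/-!
A discontinuous linear functional `f` on a real topological vector space has dense kernel, so its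
open half-space `{x | 0 < f x}` contains a translate of a dense subspace and is a dense convex cone.
It is disjoint from every subspace on which `f` vanishes, and invariant under translation by it.
Such an `f` vanishing on `W` exists when `V` is first countable and `V ⧸ W` is infinite-dimensional:
lift a linearly independent sequence of `V ⧸ W` to `V`, rescale it so that it tends to `0`, and let
`f` be `1` along it. A separable `W` in a non-separable `V` does have infinite codimension.
-/

section Separable

variable {R M : Type*} [Ring R] [TopologicalSpace R] [TopologicalSpace.SeparableSpace R]
  [AddCommGroup M] [TopologicalSpace M] [ContinuousAdd M] [Module R M] [ContinuousSMul R M]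

theorem separableSpace_of_isSeparable_of_cofg {W : Submodule R M}
    (hW : TopologicalSpace.IsSeparable (W : Set M)) (hfin : W.CoFG) :
    TopologicalSpace.SeparableSpace M := by
  obtain ⟨n, q, hq⟩ := Module.Finite.exists_fin (R := R) (M := M ⧸ W)
  choose v hv using fun i ↦ W.mkQ_surjective (q i)
  have hspan : Submodule.span R ((W : Set M) ∪ range v) = ⊤ := by
    rw [Submodule.span_union, Submodule.span_eq, ← Submodule.map_mkQ_eq_top, Submodule.map_span,
      ← range_comp, ← hq]
    exact congrArg (Submodule.span R ∘ range) (funext hv)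
  have hsep := (hW.union (finite_range v).countable.isSeparable).span (R := R)
  rwa [hspan, Submodule.top_coe, TopologicalSpace.isSeparable_univ_iff] at hsep

end Separable

section LinearAlgebra

variable {K E F : Type*} [DivisionRing K] [AddCommGroup E] [Module K E] [AddCommGroup F]
  [Module K F]

theorem exists_nat_linearIndependent_of_not_finite (h : ¬ Module.Finite K E) :
    ∃ v : ℕ → E, LinearIndependent K v := by
  let b := Module.Basis.ofVectorSpace K E
  have : Infinite (Module.Basis.ofVectorSpaceIndex K E) :=
    not_finite_iff_infinite.mp fun _ ↦ h (Module.Finite.of_basis b)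
  let e := Infinite.natEmbedding (Module.Basis.ofVectorSpaceIndex K E)
  exact ⟨b ∘ e, b.linearIndependent.comp e e.injective⟩

theorem exists_linearMap_apply_eq_of_linearIndependent {ι : Type*} {v : ι → E}
    (hv : LinearIndependent K v) (y : ι → F) : ∃ f : E →ₗ[K] F, ∀ i, f (v i) = y i := by
  obtain ⟨f, hf⟩ := ((Module.Basis.span hv).constr ℕ y).exists_extend
  refine ⟨f, fun i ↦ ?_⟩
  calc f (v i) = (f ∘ₗ (Submodule.span K (range v)).subtype) (Module.Basis.span hv i) := by
        rw [LinearMap.comp_apply, Submodule.subtype_apply, Module.Basis.span_apply]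
    _ = y i := by rw [hf, Module.Basis.constr_basis]

end LinearAlgebra

section DiscontinuousFunctional

theorem exists_ne_zero_tendsto_smul_zero {𝕜 E : Type*} [Zero 𝕜] [TopologicalSpace 𝕜]
    [(𝓝[≠] (0 : 𝕜)).NeBot] [Zero E] [SMulWithZero 𝕜 E] [TopologicalSpace E]
    [FirstCountableTopology E] [ContinuousSMul 𝕜 E] (v : ℕ → E) :
    ∃ c : ℕ → 𝕜, (∀ n, c n ≠ 0) ∧ Tendsto (fun n ↦ c n • v n) atTop (𝓝 0) := by
  obtain ⟨U, hU⟩ := (𝓝 (0 : E)).exists_antitone_basis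
  have hscale (n : ℕ) : ∃ c : 𝕜, c ≠ 0 ∧ c • v n ∈ U n := by
    have hlim : Tendsto (fun c : 𝕜 ↦ c • v n) (𝓝[≠] 0) (𝓝 0) := by
      have hcont : Continuous fun c : 𝕜 ↦ c • v n := by fun_prop
      exact (hcont.tendsto' 0 0 (zero_smul 𝕜 _)).mono_left nhdsWithin_le_nhds
    exact (eventually_mem_nhdsWithin.and (hlim (hU.mem n))).exists
  choose c hc0 hcU using hscale
  exact ⟨c, hc0, hU.tendsto hcU⟩

theorem exists_linearMap_not_continuous_of_not_cofg {𝕜 E : Type*} [DivisionRing 𝕜]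
    [TopologicalSpace 𝕜] [T1Space 𝕜] [(𝓝[≠] (0 : 𝕜)).NeBot] [AddCommGroup E] [Module 𝕜 E]
    [TopologicalSpace E] [FirstCountableTopology E] [ContinuousSMul 𝕜 E]
    {W : Submodule 𝕜 E} (hW : ¬ W.CoFG) :
    ∃ f : E →ₗ[𝕜] 𝕜, W ≤ LinearMap.ker f ∧ ¬ Continuous f := by
  obtain ⟨q, hq⟩ := exists_nat_linearIndependent_of_not_finite hW
  choose v hv using fun n ↦ W.mkQ_surjective (q n)
  obtain ⟨c, hc0, hclim⟩ := exists_ne_zero_tendsto_smul_zero (𝕜 := 𝕜) v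
  obtain ⟨g, hg⟩ := exists_linearMap_apply_eq_of_linearIndependent hq fun n ↦ (c n)⁻¹
  have hone (n : ℕ) : (g ∘ₗ W.mkQ) (c n • v n) = 1 := by
    rw [map_smul, LinearMap.comp_apply, hv, hg, smul_eq_mul, mul_inv_cancel₀ (hc0 n)]
  refine ⟨g ∘ₗ W.mkQ, W.ker_mkQ.ge.trans (LinearMap.ker_le_ker_comp _ _), fun hcont ↦ ?_⟩
  have hlim := (hcont.tendsto' 0 0 (map_zero _)).comp hclim
  simp only [Function.comp_def, hone] at hlim
  exact one_ne_zero (tendsto_const_nhds_iff.mp hlim)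

end DiscontinuousFunctional

section OpenHalfSpace

variable {V : Type*} [AddCommGroup V] [Module ℝ V]

/-- The convex cone `{x | 0 < f x}` on which a linear functional `f` is strictly positive. No
topology is involved: it is an open set only when `f` is continuous. -/
def openHalfSpace (f : V →ₗ[ℝ] ℝ) : ConvexCone ℝ V :=
  (ConvexCone.strictlyPositive ℝ ℝ).comap f

theorem mem_openHalfSpace {f : V →ₗ[ℝ] ℝ} {x : V} : x ∈ openHalfSpace f ↔ 0 < f x :=
  Iff.rfl

theorem disjoint_openHalfSpace_of_le_ker {f : V →ₗ[ℝ] ℝ} {W : Submodule ℝ V}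
    (hW : W ≤ LinearMap.ker f) : Disjoint (openHalfSpace f : Set V) W :=
  disjoint_left.mpr fun _ hx hxW ↦ (mem_openHalfSpace.mp hx).ne' (hW hxW)

theorem openHalfSpace_add_of_le_ker {f : V →ₗ[ℝ] ℝ} {W : Submodule ℝ V}
    (hW : W ≤ LinearMap.ker f) : (openHalfSpace f : Set V) + W = openHalfSpace f := by
  refine Subset.antisymm ?_ (subset_add_left _ W.zero_mem)
  rintro _ ⟨x, hx, w, hw, rfl⟩
  have hfw : f w = 0 := hW hw
  simpa only [SetLike.mem_coe, mem_openHalfSpace, map_add, hfw, add_zero] using hx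

theorem dense_openHalfSpace_of_not_continuous [TopologicalSpace V] [IsTopologicalAddGroup V]
    [ContinuousSMul ℝ V] {f : V →ₗ[ℝ] ℝ} (hf : ¬ Continuous f) :
    Dense (openHalfSpace f : Set V) := by
  have hker : Dense (LinearMap.ker f : Set V) :=
    f.isClosed_or_dense_ker.resolve_left (mt f.continuous_iff_isClosed_ker.mpr hf)
  have hf0 : f ≠ 0 := by
    rintro rfl
    exact hf continuous_zero
  obtain ⟨x, hx⟩ := LinearMap.surjective hf0 1
  refine (hker.vadd x).mono ?_
  rintro _ ⟨k, hk, rfl⟩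
  have hfk : f k = 0 := hk
  simp only [SetLike.mem_coe, mem_openHalfSpace, vadd_eq_add, map_add, hx, hfk, add_zero,
    zero_lt_one]

end OpenHalfSpace

theorem exists_dense_convex_cone_avoiding_separable_subspace_general
    {V : Type*} [AddCommGroup V] [Module ℝ V] [TopologicalSpace V] [IsTopologicalAddGroup V]
    [ContinuousSMul ℝ V] [FirstCountableTopology V] {W : Submodule ℝ V} (hW : ¬ W.CoFG) :
    ∃ C : Set V, Convex ℝ C ∧ (∀ x ∈ C, ∀ t : ℝ, 0 < t → t • x ∈ C) ∧
      Dense C ∧ (∀ x ∈ C, x ∉ W) ∧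
      ∀ U ⊆ (W : Set V),
        Convex ℝ (C + (W : Set V)) ∧
        (∀ x ∈ C + (W : Set V), ∀ t : ℝ, 0 < t → t • x ∈ C + (W : Set V)) ∧
        Dense (C + (W : Set V)) ∧ U ∩ (C + (W : Set V)) = ∅ := by
  obtain ⟨f, hfW, hf⟩ := exists_linearMap_not_continuous_of_not_cofg hW
  have hconv : Convex ℝ (openHalfSpace f : Set V) := (openHalfSpace f).convex
  have hcone : ∀ x ∈ openHalfSpace f, ∀ t : ℝ, 0 < t → t • x ∈ openHalfSpace f :=
    fun _ hx _ ht ↦ (openHalfSpace f).smul_mem ht hx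
  have hdense := dense_openHalfSpace_of_not_continuous hf
  have hdisj := disjoint_openHalfSpace_of_le_ker hfW
  refine ⟨openHalfSpace f, hconv, hcone, hdense, fun _ hx ↦ disjoint_left.mp hdisj hx,
    fun U hU ↦ ?_⟩
  rw [openHalfSpace_add_of_le_ker hfW]
  exact ⟨hconv, hcone, hdense, (hdisj.symm.mono_left hU).inter_eq⟩

/-- In a non-separable real Banach space `V`, for any separable linear subspace `W ⊆ V`
there is a dense convex cone `C ⊂ V` every element of which lies outside `W`; in
particular, for any set `U ⊆ V` whose span is `W` (so that `span U` is separable), the set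
`C' = C + span U` is a dense convex cone with `U ∩ C' = ∅` whenever `U ⊆ span U`. -/
theorem exists_dense_convex_cone_avoiding_separable_subspace
    {V : Type*} [NormedAddCommGroup V] [NormedSpace ℝ V] [CompleteSpace V]
    (hnsep : ¬ TopologicalSpace.SeparableSpace V)
    (W : Submodule ℝ V) (hWsep : TopologicalSpace.IsSeparable (W : Set V)) :
    ∃ C : Set V, Convex ℝ C ∧ (∀ x ∈ C, ∀ t : ℝ, 0 < t → t • x ∈ C) ∧
      Dense C ∧ (∀ x ∈ C, x ∉ W) ∧
      ∀ U : Set V, Submodule.span ℝ U = W → U ⊆ (W : Set V) →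
        Convex ℝ (C + (W : Set V)) ∧
        (∀ x ∈ C + (W : Set V), ∀ t : ℝ, 0 < t → t • x ∈ C + (W : Set V)) ∧
        Dense (C + (W : Set V)) ∧ U ∩ (C + (W : Set V)) = ∅ := by
  obtain ⟨C, hconv, hcone, hdense, hCW, hadd⟩ :=
    exists_dense_convex_cone_avoiding_separable_subspace_general
      (mt (separableSpace_of_isSeparable_of_cofg hWsep) hnsep)
  exact ⟨C, hconv, hcone, hdense, hCW, fun U _ hU ↦ hadd U hU⟩
end

section
/- Let (X, ⟨·,·⟩) be a real Hilbert space and let T : X → X be a potential operator of class C¹ that is not monotone. Set Γ = {(x, y) ∈ X × X : ⟨T'(x)(y), y⟩ < 0} and μ̄ = inf_{(x,y)∈Γ} ⟨T'(x)(y), y⟩/‖y‖². Then Γ ≠ ∅ and, for every μ with μ̄ < μ < 0, the functional I_μ(x) := (1/2)‖x‖² − (1/μ) J_T(x) is not convex. -/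
open Filter Topology Set

/-!
If `I_μ` is convex, its gradient `x - μ⁻¹ T x` is a monotone map, so the derivative
`v ↦ v - μ⁻¹ T'(x) v` of that gradient is a positive form. For `μ < 0` this says
`μ ‖v‖² ≤ ⟨T'(x) v, v⟩` for all `x` and `v`, that is, `μ` is a lower bound of the Rayleigh quotients
whose infimum is `μ̄`. That `Γ` is nonempty is the mean value theorem: if `T'(x)` were a positive
form at every `x`, then `T` would be monotone.
-/

open scoped InnerProductSpace

section NormedSpace

variable {E : Type*} [NormedAddCommGroup E] [NormedSpace ℝ E] {s : Set E} {f : E → ℝ} {x y : E}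

theorem fderivWithin_apply_sub_le_sub_of_convexOn {f' : E →L[ℝ] ℝ} (hf : ConvexOn ℝ s f)
    (hx : x ∈ s) (hy : y ∈ s) (hf' : HasFDerivWithinAt f f' s x) : f' (y - x) ≤ f y - f x := by
  let line : ℝ →ᵃ[ℝ] E := AffineMap.lineMap x y
  have line_zero : line 0 = x := AffineMap.lineMap_apply_zero x y
  have line_one : line 1 = y := AffineMap.lineMap_apply_one x y
  have hderiv : HasDerivWithinAt (f ∘ line) (f' (y - x)) (line ⁻¹' s) 0 :=
    HasFDerivWithinAt.comp_hasDerivWithinAt 0 (by rwa [line_zero])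
      AffineMap.hasDerivWithinAt_lineMap (mapsTo_preimage line s)
  have hslope := (hf.comp_affineMap line).le_slope_of_hasDerivWithinAt
    (by rwa [mem_preimage, line_zero]) (by rwa [mem_preimage, line_one]) zero_lt_one hderiv
  simpa [slope_def_field, line_zero, line_one] using hslope

theorem fderivWithin_sub_apply_sub_nonneg_of_convexOn {fx' fy' : E →L[ℝ] ℝ}
    (hf : ConvexOn ℝ s f) (hx : x ∈ s) (hy : y ∈ s) (hfx : HasFDerivWithinAt f fx' s x)
    (hfy : HasFDerivWithinAt f fy' s y) : 0 ≤ (fx' - fy') (x - y) := by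
  have hxy := fderivWithin_apply_sub_le_sub_of_convexOn hf hx hy hfx
  have hyx := fderivWithin_apply_sub_le_sub_of_convexOn hf hy hx hfy
  rw [← neg_sub x y, map_neg] at hxy
  rw [sub_apply]
  linarith

end NormedSpace

section InnerProductSpace

variable {X : Type*} [NormedAddCommGroup X] [InnerProductSpace ℝ X] {T : X → X} {J : X → ℝ}
  {x y : X} {μ : ℝ}

theorem inner_sub_sub_nonneg_of_inner_fderiv_nonneg {s : Set X} {T' : X → X →L[ℝ] X}
    (hs : Convex ℝ s) (hT : ∀ z ∈ s, HasFDerivWithinAt T (T' z) s z)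
    (hpos : ∀ z ∈ s, ∀ v, 0 ≤ ⟪T' z v, v⟫_ℝ) (hx : x ∈ s) (hy : y ∈ s) :
    0 ≤ ⟪T x - T y, x - y⟫_ℝ := by
  have hderiv : ∀ z ∈ s, HasFDerivWithinAt (fun z ↦ ⟪x - y, T z⟫_ℝ)
      ((innerSL ℝ (x - y)).comp (T' z)) s z :=
    fun z hz ↦ (innerSL ℝ (x - y)).hasFDerivAt.comp_hasFDerivWithinAt z (hT z hz)
  obtain ⟨z, hz, hmean⟩ := domain_mvt hderiv hs hy hx
  calc
    0 ≤ ⟪T' z (x - y), x - y⟫_ℝ := hpos z (hs.segment_subset hy hx hz) (x - y)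
    _ = ⟪x - y, T x⟫_ℝ - ⟪x - y, T y⟫_ℝ := by rw [hmean, real_inner_comm]; rfl
    _ = ⟪T x - T y, x - y⟫_ℝ := by rw [← inner_sub_right, real_inner_comm]

theorem inner_fderiv_nonneg_of_eventually_inner_sub_sub_nonneg {T' : X →L[ℝ] X}
    (hT : HasFDerivAt T T' x) (hmono : ∀ᶠ z in 𝓝 x, 0 ≤ ⟪T z - T x, z - x⟫_ℝ) (v : X) :
    0 ≤ ⟪T' v, v⟫_ℝ := by
  have hslope : Tendsto (fun t : ℝ ↦ ⟪t⁻¹ • (T (x + t • v) - T x), v⟫_ℝ) (𝓝[≠] 0)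
      (𝓝 ⟪T' v, v⟫_ℝ) := (hT.hasLineDerivAt v).tendsto_slope_zero.inner tendsto_const_nhds
  have hline : Tendsto (fun t : ℝ ↦ x + t • v) (𝓝[≠] 0) (𝓝 x) := by
    have hcont : Continuous fun t : ℝ ↦ x + t • v := by fun_prop
    simpa using (hcont.tendsto 0).mono_left nhdsWithin_le_nhds
  refine ge_of_tendsto hslope ?_
  filter_upwards [hline.eventually hmono, self_mem_nhdsWithin] with t ht ht0
  have hscale : ⟪t⁻¹ • (T (x + t • v) - T x), v⟫_ℝ
      = (t⁻¹) ^ 2 * ⟪T (x + t • v) - T x, x + t • v - x⟫_ℝ := by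
    rw [add_sub_cancel_left, real_inner_smul_left, real_inner_smul_right]
    field_simp [show t ≠ 0 from ht0]
  rw [hscale]
  positivity

theorem hasFDerivAt_half_norm_sq_sub_mul (c : ℝ) (hJ : HasFDerivAt J (innerSL ℝ (T x)) x) :
    HasFDerivAt (fun z ↦ (1 / 2) * ‖z‖ ^ 2 - c * J z) (innerSL ℝ (x - c • T x)) x := by
  refine (((hasStrictFDerivAt_norm_sq x).hasFDerivAt.const_mul (1 / 2)).sub
    (hJ.const_mul c)).congr_fderiv ?_
  ext v
  simp

theorem mul_norm_sq_le_inner_fderiv_of_convexOn {T' : X →L[ℝ] X} (hμ : μ < 0)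
    (hJ : ∀ z, HasFDerivAt J (innerSL ℝ (T z)) z) (hT : HasFDerivAt T T' x)
    (hconv : ConvexOn ℝ univ fun z ↦ (1 / 2) * ‖z‖ ^ 2 - (1 / μ) * J z) (v : X) :
    μ * ‖v‖ ^ 2 ≤ ⟪T' v, v⟫_ℝ := by
  let grad : X → X := fun z ↦ z - (1 / μ) • T z
  have hgrad_mono (z : X) : 0 ≤ ⟪grad z - grad x, z - x⟫_ℝ := by
    have hderiv (w : X) : HasFDerivWithinAt (fun z ↦ (1 / 2) * ‖z‖ ^ 2 - (1 / μ) * J z)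
        (innerSL ℝ (grad w)) univ w :=
      (hasFDerivAt_half_norm_sq_sub_mul (1 / μ) (hJ w)).hasFDerivWithinAt
    simpa only [← map_sub, innerSL_apply_apply] using
      fderivWithin_sub_apply_sub_nonneg_of_convexOn hconv (mem_univ z) (mem_univ x)
        (hderiv z) (hderiv x)
  have hgrad_deriv : HasFDerivAt grad (.id ℝ X - (1 / μ) • T') x :=
    (hasFDerivAt_id x).sub (hT.const_smul (1 / μ))
  have hform := inner_fderiv_nonneg_of_eventually_inner_sub_sub_nonneg hgrad_deriv
    (.of_forall hgrad_mono) v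
  have hquot : ⟪T' v, v⟫_ℝ / μ ≤ ‖v‖ ^ 2 := by
    simpa [inner_sub_left, real_inner_smul_left, inv_mul_eq_div] using hform
  rwa [div_le_iff_of_neg hμ, mul_comm] at hquot

/-- The set `Γ` of pairs `(x, v)` such that the quadratic form of the derivative of `T` at `x` is
negative at `v`; such a `v` is nonzero. -/
def negativeDirections (T : X → X) : Set (X × X) :=
  {p | ⟪fderiv ℝ T p.1 p.2, p.2⟫_ℝ < 0}

/-- The infimum `μ̄` of the Rayleigh quotients of the derivative of `T` over its negative
directions, in `EReal` because the quotients need not be bounded below. -/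
noncomputable def negativeRayleighInf (T : X → X) : EReal :=
  ⨅ p : negativeDirections T,
    ((⟪fderiv ℝ T p.1.1 p.1.2, p.1.2⟫_ℝ / ‖p.1.2‖ ^ 2 : ℝ) : EReal)

theorem negativeDirections_nonempty (hT : Differentiable ℝ T)
    (hmono : ¬ ∀ x y, 0 ≤ ⟪T x - T y, x - y⟫_ℝ) : (negativeDirections T).Nonempty := by
  contrapose! hmono with hempty
  have hpos (z v : X) : 0 ≤ ⟪fderiv ℝ T z v, v⟫_ℝ :=
    not_lt.mp (eq_empty_iff_forall_notMem.mp hempty (z, v))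
  exact fun x y ↦ inner_sub_sub_nonneg_of_inner_fderiv_nonneg convex_univ
    (fun z _ ↦ (hT z).hasFDerivAt.hasFDerivWithinAt) (fun z _ ↦ hpos z) (mem_univ x) (mem_univ y)

theorem le_negativeRayleighInf_of_convexOn (hT : Differentiable ℝ T)
    (hJ : ∀ z, HasFDerivAt J (innerSL ℝ (T z)) z) (hμ : μ < 0)
    (hconv : ConvexOn ℝ univ fun z ↦ (1 / 2) * ‖z‖ ^ 2 - (1 / μ) * J z) :
    (μ : EReal) ≤ negativeRayleighInf T := by
  refine le_iInf fun ⟨⟨x, v⟩, hneg⟩ ↦ EReal.coe_le_coe_iff.mpr ?_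
  have hv : v ≠ 0 := by
    rintro rfl
    simp [negativeDirections] at hneg
  rw [le_div_iff₀ (by positivity)]
  exact mul_norm_sq_le_inner_fderiv_of_convexOn hμ hJ (hT x).hasFDerivAt hconv v

theorem Imu_not_convex_of_nonmonotone_general (hT : Differentiable ℝ T)
    (hJ : ∀ z, HasFDerivAt J (innerSL ℝ (T z)) z)
    (hmono : ¬ ∀ x y, 0 ≤ ⟪T x - T y, x - y⟫_ℝ) :
    (negativeDirections T).Nonempty ∧ ∀ μ : ℝ, negativeRayleighInf T < μ → μ < 0 →
      ¬ ConvexOn ℝ univ fun z ↦ (1 / 2) * ‖z‖ ^ 2 - (1 / μ) * J z :=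
  ⟨negativeDirections_nonempty hT hmono, fun _ hlt hμ hconv ↦
    hlt.not_ge (le_negativeRayleighInf_of_convexOn hT hJ hμ hconv)⟩

end InnerProductSpace

/-- From the proof of Theorem 3: if `T` is a non-monotone `C¹` potential operator on a real
Hilbert space `X`, then `Γ = {(x,y) : ⟨T'(x)y, y⟩ < 0}` is nonempty and, for every `μ` with
`μ̄ < μ < 0` (where `μ̄ = inf_{(x,y) ∈ Γ} ⟨T'(x)y, y⟩ / ‖y‖²`), the functional
`I_μ(x) = ½‖x‖² - (1/μ) J_T(x)` is not convex. -/
theorem Imu_not_convex_of_nonmonotone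
    {X : Type*} [NormedAddCommGroup X] [InnerProductSpace ℝ X] [CompleteSpace X]
    (T : X → X)
    (hTC1 : ContDiff ℝ 1 T)
    (JT : X → ℝ)
    (hJT : JT = fun x => ∫ s in (0:ℝ)..1, @inner ℝ X _ (T (s • x)) x)
    (hpot : ∀ x : X, HasFDerivAt JT (InnerProductSpace.toDual ℝ X (T x) : X →L[ℝ] ℝ) x)
    (hnmono : ¬ ∀ x y : X, 0 ≤ @inner ℝ X _ (T x - T y) (x - y))
    (Γ : Set (X × X))
    (hΓ : Γ = {p : X × X | @inner ℝ X _ (fderiv ℝ T p.1 p.2) p.2 < 0})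
    (μbar : EReal)
    (hμbar : μbar = ⨅ p : Γ, ((@inner ℝ X _ (fderiv ℝ T (p : X × X).1 (p : X × X).2)
      (p : X × X).2 / ‖(p : X × X).2‖ ^ 2 : ℝ) : EReal)) :
    Γ.Nonempty ∧ ∀ μ : ℝ, μbar < (μ : EReal) → μ < 0 →
      ¬ ConvexOn ℝ Set.univ (fun x : X => (1/2) * ‖x‖ ^ 2 - (1/μ) * JT x) := by
  subst hΓ hμbar
  exact Imu_not_convex_of_nonmonotone_general (hTC1.differentiable one_ne_zero) hpot hnmono
end
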